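/- For every integer k ≥ 2 there exists an infinite binary k-automatic sequence whose critical exponent is at most 7/3; in particular, for each k that is a power of 2 the Thue–Morse sequence works, and its critical exponent equals 2. -/

import Mathlib

/-- A sequence `a` is `m`-automatic if some DFAO, reading the base-`m` digits of `n`
starting with the most significant digit, outputs `a n`. -/
def IsAutomatic {α : Type} (m : ℕ) (a : ℕ → α) : Prop :=
  ∃ (Q : Type) (_ : Fintype Q) (q0 : Q) (δ : Q → ℕ → Q) (out : Q → α),
    ∀ n : ℕ, a n = out (((Nat.digits m n).reverse).foldl δ q0)

/-- Critical exponent at most 7/3: no factor of exponent > 7/3, i.e. no factor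
of length `n` with a period `p` such that `3n > 7p`. -/
def CritExpLeSevenThirds (x : ℕ → Fin 2) : Prop :=
  ¬ ∃ i n p : ℕ, 1 ≤ p ∧ p ≤ n ∧ 3 * n > 7 * p ∧
      ∀ j : ℕ, j + p < n → x (i + j) = x (i + j + p)

/-- The Thue–Morse sequence, as an infinite binary word. -/
def tm (n : ℕ) : Fin 2 := if ((Nat.digits 2 n).count 1) % 2 = 1 then 1 else 0

/-!
Replacing `k` by a power `K = k ^ 5 ≥ 27` does not change which words are automatic, so uniform
morphisms of length `K` are available. A `K`-uniform morphism on four letters is built from blocks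
`3 c(x) 3 t₀ t₁ t₂ ⋯`, where `t` is the square-free ternary word of differences of the Thue–Morse
word and the marker `3` synchronises: a square in a fixed point whose period is not a multiple of
`K` would misalign markers, and a square whose period is a multiple of `K` decodes, by the
ps-property of Keränen, to a square of shorter period. So the fixed point is square-free.

A `21`-uniform morphism sends it to a binary word. Factors of length `19` of the image determine
their position modulo `21`, so a repetition of exponent above `7/3` either has period less than
`14`, which is a finite check, or a period divisible by `21`, and then it decodes to a square.
-/

namespace RepetitionThreshold

open Function (IsFixedPt)

section Words

variable {α γ : Type*}

/-- The factor of `a` of length `p + l` starting at position `i` has period `p`: it is a square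
for `l = p` and an overlap for `l = p + 1`. -/
def Repeats (a : ℕ → α) (i p l : ℕ) : Prop :=
  ∀ j < l, a (i + j) = a (i + j + p)

/-- The infinite word `a` contains no square, that is, no nonempty factor of the form `uu`. -/
def IsSquareFree (a : ℕ → α) : Prop :=
  ∀ i p, 1 ≤ p → ¬ Repeats a i p p

/-- The infinite word `a` contains no overlap, that is, no factor of exponent greater than `2`. -/
def IsOverlapFree (a : ℕ → α) : Prop :=
  ∀ i p, 1 ≤ p → ¬ Repeats a i p (p + 1)

instance [DecidableEq α] (a : ℕ → α) (i p l : ℕ) : Decidable (Repeats a i p l) :=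
  inferInstanceAs (Decidable (∀ j < l, a (i + j) = a (i + j + p)))

theorem Repeats.mono {a : ℕ → α} {i p l l' : ℕ} (h : Repeats a i p l) (hl : l' ≤ l) :
    Repeats a i p l' :=
  fun j hj => h j (hj.trans_le hl)

theorem Repeats.eq_add {a : ℕ → α} {i p l n : ℕ} (h : Repeats a i p l) (hin : i ≤ n)
    (hn : n < i + l) : a n = a (n + p) := by
  simpa only [Nat.add_sub_cancel' hin] using h (n - i) (by omega)

theorem IsSquareFree.ne_succ {a : ℕ → α} (ha : IsSquareFree a) (n : ℕ) : a n ≠ a (n + 1) := by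
  intro h
  refine ha n 1 le_rfl fun j hj => ?_
  obtain rfl : j = 0 := by omega
  exact h

/-- The finite word `a i, …, a (i + l - 1)`. -/
def factor (a : ℕ → α) (i l : ℕ) : List α :=
  (List.range' i l).map a

theorem Repeats.factor_eq {a : ℕ → α} {i p l : ℕ} (h : Repeats a i p l) :
    factor a i l = factor a (i + p) l := by
  refine List.ext_getElem (by simp [factor]) fun j hj _ => ?_
  have hjl : j < l := by simpa [factor] using hj
  simpa [factor, add_right_comm] using h j hjl

theorem factor_add_eq_take_drop (a : ℕ → α) {i o l n : ℕ} (h : o + l ≤ n) :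
    factor a (i + o) l = ((factor a i n).drop o).take l := by
  have hl : l ≤ n - o := by omega
  simp only [factor, ← List.map_drop, ← List.map_take, List.drop_range', mul_one,
    List.take_range'_of_length_ge hl]

/-- The image of the infinite word `a` under the `L`-uniform morphism
`x ↦ β x 0, …, β x (L - 1)`. -/
def uniformImage (L : ℕ) (β : α → ℕ → γ) (a : ℕ → α) (n : ℕ) : γ :=
  β (a (n / L)) (n % L)

theorem uniformImage_mul_add {L r : ℕ} (β : α → ℕ → γ) (a : ℕ → α) (q : ℕ) (hr : r < L) :
    uniformImage L β a (L * q + r) = β (a q) r := by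
  have hL : 0 < L := Nat.zero_lt_of_lt hr
  simp [uniformImage, Nat.mul_add_div hL, Nat.div_eq_of_lt hr, Nat.mod_eq_of_lt hr]

theorem uniformImage_uniformImage {δ : Type*} (L M : ℕ) (β : γ → ℕ → δ) (β' : α → ℕ → γ)
    (a : ℕ → α) :
    uniformImage L β (uniformImage M β' a) =
      uniformImage (L * M) (fun x d => β (β' x (d / L)) (d % L)) a := by
  funext n
  simp only [uniformImage, Nat.div_div_eq_div_mul, Nat.mod_mul_right_div_self,
    Nat.mod_mul_right_mod]

theorem factor_uniformImage (L : ℕ) (β : α → ℕ → γ) (a : ℕ → α) (q m : ℕ) :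
    factor (uniformImage L β a) (L * q) (L * m) =
      (factor a q m).flatMap fun x => (List.range L).map (β x) := by
  induction m generalizing q with
  | zero => simp [factor]
  | succ m ih =>
    have hblock : factor (uniformImage L β a) (L * q) L = (List.range L).map (β (a q)) := by
      simp only [factor, List.range'_eq_map_range, List.map_map]
      refine List.map_congr_left fun r hr => ?_
      exact uniformImage_mul_add β a q (List.mem_range.1 hr)
    calc factor (uniformImage L β a) (L * q) (L * (m + 1))
        = factor (uniformImage L β a) (L * q) L ++
            factor (uniformImage L β a) (L * (q + 1)) (L * m) := by
          simp only [factor, ← List.map_append, mul_add_one, List.range'_append_1,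
            add_comm (L * m)]
      _ = (factor a q (m + 1)).flatMap fun x => (List.range L).map (β x) := by
          rw [hblock, ih]
          simp [factor, List.range'_succ]

theorem isFixedPt_uniformImage_iff {k : ℕ} (hk : 0 < k) {σ : α → ℕ → α} {s : ℕ → α} :
    IsFixedPt (uniformImage k σ) s ↔ ∀ n, ∀ d < k, s (k * n + d) = σ (s n) d := by
  constructor
  · intro h n d hd
    rw [← uniformImage_mul_add σ s n hd, h]
  · intro h
    funext n
    rw [uniformImage, ← h _ _ (Nat.mod_lt n hk), Nat.div_add_mod]

theorem exists_isFixedPt_uniformImage_pow {k : ℕ} {σ : α → ℕ → α} {s : ℕ → α}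
    (hs : IsFixedPt (uniformImage k σ) s) (i : ℕ) :
    ∃ τ, IsFixedPt (uniformImage (k ^ i) τ) s := by
  induction i with
  | zero => exact ⟨fun x _ => x, by funext n; simp [uniformImage]⟩
  | succ i ih =>
    obtain ⟨τ, hτ⟩ := ih
    refine ⟨fun x d => σ (τ x (d / k)) (d % k), ?_⟩
    rw [IsFixedPt, pow_succ', ← uniformImage_uniformImage, hτ, hs]

theorem exists_isFixedPt_uniformImage {k : ℕ} (hk : 0 < k) {s : ℕ → α}
    (hs : ∀ m n, ∀ d < k, s m = s n → s (k * m + d) = s (k * n + d)) :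
    ∃ σ, IsFixedPt (uniformImage k σ) s :=
  ⟨fun x d => s (k * Function.invFun s x + d), (isFixedPt_uniformImage_iff hk).2 fun n d hd =>
    hs _ _ d hd (Function.apply_invFun_apply (f := s) (a := n)).symm⟩

end Words

section Automaticity

variable {Q α : Type}

theorem foldl_reverse_digits {k n : ℕ} (hk : 1 < k) (hn : 0 < n) (δ : Q → ℕ → Q) (q : Q) :
    (Nat.digits k n).reverse.foldl δ q =
      δ ((Nat.digits k (n / k)).reverse.foldl δ q) (n % k) := by
  simp [Nat.digits_def' hk hn]

theorem isAutomatic_comp_of_isFixedPt [Finite Q] {k : ℕ} (hk : 1 < k) {σ : Q → ℕ → Q} {s : ℕ → Q}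
    (hs : IsFixedPt (uniformImage k σ) s) (f : Q → α) : IsAutomatic k (f ∘ s) := by
  have hfold (n : ℕ) : s n = (Nat.digits k n).reverse.foldl σ (s 0) := by
    induction n using Nat.strong_induction_on with
    | _ n ih =>
      rcases n.eq_zero_or_pos with rfl | hn
      · simp
      · rw [foldl_reverse_digits hk hn, ← ih _ (Nat.div_lt_self hn hk)]
        exact (congrFun hs n).symm
  exact ⟨Q, Fintype.ofFinite Q, s 0, σ, f, fun n => congrArg f (hfold n)⟩

theorem exists_isFixedPt_of_prolongable {k : ℕ} (hk : 1 < k) {σ : Q → ℕ → Q} {q : Q}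
    (hq : σ q 0 = q) : ∃ s, IsFixedPt (uniformImage k σ) s := by
  refine ⟨fun n => (Nat.digits k n).reverse.foldl σ q, funext fun n => ?_⟩
  rcases n.eq_zero_or_pos with rfl | hn
  · simp [uniformImage, hq]
  · exact (foldl_reverse_digits hk hn σ q).symm

/- Reading one base-`k` digit moves from `n` to its children `k * n + d`, so the word
`n ↦ (s (k ^ i * n + e))` over all `i < r`, `e < k ^ i` is again a fixed point: a child's
descendants of depth `i` are descendants of depth `i + 1`, and at depth `r` the given morphism
takes over. -/
theorem isAutomatic_comp_of_isFixedPt_pow [Finite Q] {k r : ℕ} (hk : 1 < k) (hr : 0 < r)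
    {σ : Q → ℕ → Q} {s : ℕ → Q} (hs : IsFixedPt (uniformImage (k ^ r) σ) s)
    (f : Q → α) : IsAutomatic k (f ∘ s) := by
  rw [isFixedPt_uniformImage_iff (by positivity)] at hs
  let descendants (n : ℕ) (x : Σ i : Fin r, Fin (k ^ (i : ℕ))) : Q := s (k ^ (x.1 : ℕ) * n + x.2)
  let root : Σ i : Fin r, Fin (k ^ (i : ℕ)) := ⟨⟨0, hr⟩, ⟨0, by simp⟩⟩
  have hroot (n : ℕ) : descendants n root = s n := by simp [descendants, root]
  obtain ⟨τ, hτ⟩ := exists_isFixedPt_uniformImage (k := k) (s := descendants) (by omega) <| by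
    rintro m n d hd hmn
    funext ⟨⟨i, hi⟩, ⟨e, he⟩⟩
    have hassoc (m : ℕ) : k ^ i * (k * m + d) + e = k ^ (i + 1) * m + (k ^ i * d + e) := by ring
    have hlt : k ^ i * d + e < k ^ (i + 1) :=
      calc k ^ i * d + e
        _ < k ^ i * (d + 1) := by simpa only [mul_add_one, add_lt_add_iff_left] using he
        _ ≤ k ^ i * k := Nat.mul_le_mul_left _ hd
        _ = k ^ (i + 1) := (pow_succ ..).symm
    simp only [descendants, hassoc]
    rcases (Nat.succ_le_of_lt hi).lt_or_eq with hi' | rfl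
    · exact congrFun hmn ⟨⟨i + 1, hi'⟩, ⟨_, hlt⟩⟩
    · rw [hs _ _ hlt, hs _ _ hlt, ← hroot m, ← hroot n, hmn]
  have hcomp : f ∘ s = (fun F => f (F root)) ∘ descendants :=
    funext fun n => congrArg f (hroot n).symm
  rw [hcomp]
  exact isAutomatic_comp_of_isFixedPt hk hτ _

theorem exists_isFixedPt_uniformImage_prod {k L : ℕ} [NeZero L] (hk : 0 < k) {σ : Q → ℕ → Q}
    {s : ℕ → Q} (hs : IsFixedPt (uniformImage k σ) s) :
    ∃ τ, IsFixedPt (uniformImage k τ) fun n => (s (n / L), Fin.ofNat L n) := by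
  have hL : 0 < L := NeZero.pos L
  rw [isFixedPt_uniformImage_iff hk] at hs
  refine ⟨fun x d => (σ x.1 ((k * x.2 + d) / L), Fin.ofNat L (k * x.2 + d)),
    (isFixedPt_uniformImage_iff hk).2 fun n d hd => ?_⟩
  have hsplit : k * n + d = L * (k * (n / L)) + (k * (n % L) + d) := by
    conv_lhs => rw [← Nat.div_add_mod n L]
    ring
  have hlt : (k * (n % L) + d) / L < k := by
    have hmod : n % L < L := Nat.mod_lt n hL
    rw [Nat.div_lt_iff_lt_mul hL]
    nlinarith
  ext1
  · simp only [Fin.val_ofNat]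
    rw [hsplit, Nat.mul_add_div hL, hs _ _ hlt]
  · ext
    simp only [Fin.val_ofNat]
    rw [hsplit, Nat.mul_add_mod]

theorem isAutomatic_uniformImage [Finite Q] {k r L : ℕ} (hk : 1 < k) (hr : 0 < r) (hL : 0 < L)
    {σ : Q → ℕ → Q} {s : ℕ → Q} (hs : IsFixedPt (uniformImage (k ^ r) σ) s)
    (β : Q → ℕ → α) : IsAutomatic k (uniformImage L β s) := by
  have : NeZero L := ⟨hL.ne'⟩
  obtain ⟨τ, hτ⟩ := exists_isFixedPt_uniformImage_prod (L := L) (by positivity) hs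
  exact isAutomatic_comp_of_isFixedPt_pow hk hr hτ fun x => β x.1 x.2

end Automaticity

section PSMorphisms

variable {α γ : Type*}

/-- The `L`-uniform morphism `x ↦ β x` is a ps-morphism (Keränen): if `β y = p s`, where `s` is
also a suffix of `β x` and `p` a prefix of `β z`, then `y` is one of `x` and `z`. -/
def IsPSMorphism (L : ℕ) (β : α → ℕ → γ) : Prop :=
  ∀ t ≤ L, ∀ x y z, (∀ r < L, t ≤ r → β x r = β y r) → (∀ r < t, β y r = β z r) → x = y ∨ y = z

theorem IsPSMorphism.mono {L M : ℕ} {β : α → ℕ → γ} (h : IsPSMorphism L β) (hLM : L ≤ M) :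
    IsPSMorphism M β := fun t _ x y z hsuffix hprefix =>
  h (min t L) (min_le_right t L) x y z (fun r hr htr => hsuffix r (by omega) (by omega))
    fun r hr => hprefix r (by omega)

theorem IsPSMorphism.injective {L : ℕ} {β : α → ℕ → γ} (h : IsPSMorphism L β) {x y : α}
    (hxy : ∀ r < L, β x r = β y r) : x = y :=
  (h 0 L.zero_le x y x (fun r hr _ => hxy r hr) fun _ hr => absurd hr (Nat.not_lt_zero _)).elim
    id Eq.symm

/- Blocks lying inside the first period are compared in full with their translates, hence decode;
only the block cut by the start of the square is not, and there the ps-property decides whether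
the decoded square starts at that block or at the next one. -/
theorem IsPSMorphism.exists_square {L m i : ℕ} {β : α → ℕ → γ} (hβ : IsPSMorphism L β)
    {a : ℕ → α} (hL : 0 < L) (hm : 0 < m)
    (h : Repeats (uniformImage L β a) i (L * m) (L * m)) : ∃ q, Repeats a q m m := by
  obtain ⟨q, t, ht, rfl⟩ : ∃ q t, t < L ∧ i = L * q + t :=
    ⟨i / L, i % L, Nat.mod_lt i hL, (Nat.div_add_mod i L).symm⟩
  have hletter (c r : ℕ) (hr : r < L) (hlow : L * q + t ≤ L * c + r)
      (hhigh : L * c + r < L * q + t + L * m) : β (a c) r = β (a (c + m)) r := by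
    rw [← uniformImage_mul_add β a c hr, ← uniformImage_mul_add β a (c + m) hr,
      h.eq_add hlow hhigh]
    congr 1
    ring
  have hinner (j : ℕ) (hj0 : 0 < j) (hjm : j < m) : a (q + j) = a (q + j + m) := by
    have hstart : L ≤ L * j := Nat.le_mul_of_pos_right L hj0
    have hend : L * j + L ≤ L * m := Nat.mul_le_mul_left L hjm
    refine hβ.injective fun r hr => hletter _ r hr ?_ ?_ <;> rw [mul_add] <;> omega
  have hcut : a q = a (q + m) ∨ a (q + m) = a (q + m + m) := by
    have hLm : L ≤ L * m := Nat.le_mul_of_pos_right L hm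
    have hadd : L * (q + m) = L * q + L * m := mul_add ..
    exact hβ t ht.le _ _ _ (fun r hr htr => hletter q r hr (by omega) (by omega))
      fun r hr => hletter (q + m) r (hr.trans ht) (by omega) (by omega)
  rcases hcut with hq | hqm
  · refine ⟨q, fun j hj => ?_⟩
    rcases j.eq_zero_or_pos with rfl | hj0
    · exact hq
    · exact hinner j hj0 hj
  · refine ⟨q + 1, fun j hj => ?_⟩
    rw [add_assoc q 1 j, add_comm 1 j]
    rcases (Nat.succ_le_of_lt hj).lt_or_eq with hj' | rfl
    · exact hinner (j + 1) j.succ_pos hj'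
    · exact hqm

end PSMorphisms

section ThueMorse

theorem tm_two_mul (n : ℕ) : tm (2 * n) = tm n := by
  rcases n.eq_zero_or_pos with rfl | hn
  · rfl
  · simp [tm, Nat.digits_def' one_lt_two (Nat.mul_pos two_pos hn)]

theorem tm_two_mul_add_one (n : ℕ) : tm (2 * n + 1) = tm n + 1 := by
  have hdiv : (2 * n + 1) / 2 = n := by omega
  have hmod : (2 * n + 1) % 2 = 1 := by omega
  rw [tm, tm, Nat.digits_def' one_lt_two (2 * n).succ_pos, hdiv, hmod, List.count_cons_self]
  split_ifs <;> first | rfl | omega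

theorem isFixedPt_tm : IsFixedPt (uniformImage 2 fun x d => x + Fin.ofNat 2 d) tm := by
  refine (isFixedPt_uniformImage_iff two_pos).2 fun n d hd => ?_
  interval_cases d
  · simp [tm_two_mul]
  · exact tm_two_mul_add_one n

theorem tm_succ_of_even {n : ℕ} (hn : Even n) : tm (n + 1) = tm n + 1 := by
  obtain ⟨m, rfl⟩ := even_iff_exists_two_mul.1 hn
  rw [tm_two_mul_add_one, tm_two_mul]

theorem repeats_tm_of_repeats_two_mul {i q l : ℕ} (h : Repeats tm i (2 * q) (2 * l + 1)) :
    Repeats tm (i / 2) q (l + 1) := by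
  intro j hj
  have hfix := (isFixedPt_uniformImage_iff two_pos).1 isFixedPt_tm
  have hhalf (m : ℕ) : tm (i + 2 * m) = tm (i / 2 + m) + Fin.ofNat 2 (i % 2) := by
    rw [← hfix _ _ (i.mod_lt two_pos)]
    congr 1
    omega
  have heq := h (2 * j) (by omega)
  rw [add_assoc, ← mul_add, hhalf, hhalf, ← add_assoc] at heq
  exact add_right_cancel heq

/- With an odd period, of two equal pairs of consecutive letters one starts at an even position, so
the letters of the overlap alternate; an odd shift then changes the letter. -/
theorem not_repeats_tm_of_odd {i p : ℕ} (hp : Odd p) : ¬ Repeats tm i p (p + 1) := by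
  intro h
  have hsucc (j : ℕ) (hj : j < p) : tm (i + j + 1) = tm (i + j) + 1 := by
    rcases (i + j).even_or_odd with heven | hodd
    · exact tm_succ_of_even heven
    · have hnext : tm (i + j + 1) = tm (i + j + p + 1) := by
        simpa only [add_assoc, add_comm 1 p] using h (j + 1) (by omega)
      rw [hnext, h j (by omega), tm_succ_of_even (hodd.add_odd hp)]
  have htwo (j : ℕ) (hj : 2 * j ≤ p) : tm (i + 2 * j) = tm i := by
    induction j with
    | zero => rfl
    | succ j ih =>
      calc tm (i + 2 * (j + 1))
        _ = tm (i + 2 * j + 1 + 1) := rfl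
        _ = tm (i + 2 * j) + 1 + 1 := by
          rw [add_assoc i, hsucc (2 * j + 1) (by omega), ← add_assoc i, hsucc (2 * j) (by omega)]
        _ = tm i + 1 + 1 := by rw [ih (by omega)]
        _ = tm i := by rw [add_assoc]; exact add_zero _
  obtain ⟨q, rfl⟩ := hp
  have hlast : tm (i + (2 * q + 1)) = tm i + 1 := by
    rw [← add_assoc, hsucc _ (by omega), htwo q (by omega)]
  have hzero : tm i = tm (i + (2 * q + 1)) := h 0 (by omega)
  exact absurd (hzero.trans hlast) (by simp)

theorem isOverlapFree_tm : IsOverlapFree tm := by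
  intro i p hp h
  induction p using Nat.strong_induction_on generalizing i with
  | _ p ih =>
    rcases p.even_or_odd' with ⟨q, rfl | rfl⟩
    · exact ih q (by omega) _ (by omega) (repeats_tm_of_repeats_two_mul h)
    · exact not_repeats_tm_of_odd (odd_two_mul_add_one q) h

/-- The word of differences `a (n + 1) - a n ∈ {-1, 0, 1}` of a binary word, shifted by one to
take the values `0`, `1` and `2`. For the Thue–Morse word it is a ternary square-free word. -/
def ternaryDiff (a : ℕ → Fin 2) (n : ℕ) : Fin 3 :=
  ⟨1 + (a (n + 1) : ℕ) - a n, by omega⟩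

theorem coe_ternaryDiff (a : ℕ → Fin 2) (n : ℕ) :
    ((ternaryDiff a n : ℕ) : ℤ) = 1 + ((a (n + 1) : ℕ) : ℤ) - ((a n : ℕ) : ℤ) := by
  have := (a n).isLt
  simp only [ternaryDiff]
  omega

theorem ternaryDiff_ne_one_of_eq_zero {a : ℕ → Fin 2} {n : ℕ} (h₀ : ternaryDiff a n = 0)
    (h₂ : ternaryDiff a (n + 2) = 0) : ternaryDiff a (n + 1) ≠ 1 := by
  intro h₁
  have h0 := coe_ternaryDiff a n
  have h1 : _ = 1 + ((a (n + 2) : ℕ) : ℤ) - _ := coe_ternaryDiff a (n + 1)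
  have h2 := coe_ternaryDiff a (n + 2)
  simp only [h₀, h₁, h₂, Fin.val_zero, Fin.val_one, Nat.cast_zero, Nat.cast_one] at h0 h1 h2
  omega

/- A square in the differences makes `a` repeat up to a constant difference; that constant is the
increment of `a` over two consecutive periods, so it vanishes because `a` takes two values. -/
theorem IsOverlapFree.isSquareFree_ternaryDiff {a : ℕ → Fin 2} (ha : IsOverlapFree a) :
    IsSquareFree (ternaryDiff a) := by
  intro i p hp h
  have hsum (j : ℕ) (hj : j ≤ p) :
      ((a (i + j) : ℕ) : ℤ) - (a i : ℕ) = (a (i + j + p) : ℕ) - (a (i + p) : ℕ) := by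
    induction j with
    | zero => simp
    | succ j ih =>
      have hstep := congrArg (fun x : Fin 3 => ((x : ℕ) : ℤ)) (h j hj)
      simp only [coe_ternaryDiff] at hstep
      rw [← add_assoc, add_right_comm _ 1 p]
      linarith [ih (by omega)]
  have hconst : a i = a (i + p) := by
    have := hsum p le_rfl
    omega
  refine ha i p hp fun j hj => ?_
  have := hsum j (by omega)
  omega

end ThueMorse

section MarkedBlocks

/-- The head `3 c(x) 3` of the image of the letter `x` under `markedBlock`. The marker `3` occurs
only at its ends, and the eight letters `c(x)` form a square-free ternary code word. -/
def markedHead : Fin 4 → List (Fin 4) :=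
  ![[3, 0, 1, 0, 2, 1, 2, 0, 2, 3],
    [3, 0, 1, 0, 2, 1, 0, 1, 2, 3],
    [3, 0, 1, 0, 2, 0, 1, 2, 1, 3],
    [3, 0, 1, 0, 2, 0, 1, 2, 0, 3]]

/-- The morphism `x ↦ 3 c(x) 3 t₀ t₁ t₂ ⋯` on four letters, where `t` is the ternary Thue–Morse
word. The images are infinite: cut to length `K`, they define a `K`-uniform morphism, whose fixed
points are square-free as soon as `27 ≤ K`. -/
def markedBlock (x : Fin 4) (r : ℕ) : Fin 4 :=
  if r < 10 then (markedHead x).getD r 0 else (ternaryDiff tm (r - 10)).castSucc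

theorem markedBlock_ten_add (x : Fin 4) (n : ℕ) :
    markedBlock x (10 + n) = (ternaryDiff tm n).castSucc := by
  simp [markedBlock]

theorem markedBlock_eq_three_iff {x : Fin 4} {r : ℕ} : markedBlock x r = 3 ↔ r = 0 ∨ r = 9 := by
  rcases lt_or_ge r 10 with hr | hr
  · revert x r
    decide
  · obtain ⟨n, rfl⟩ := Nat.exists_eq_add_of_le hr
    have hne : markedBlock x (10 + n) ≠ 3 := by
      rw [markedBlock_ten_add]
      exact Fin.castSucc_ne_last _
    exact iff_of_false hne (by omega)

theorem markedBlock_one_ne_ten (x : Fin 4) : markedBlock x 1 ≠ markedBlock x 10 := by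
  have h₁ : markedBlock x 1 = 0 := by revert x; decide
  have h₁₀ : markedBlock x 10 = 2 := by
    rw [markedBlock_ten_add x 0]
    simp [ternaryDiff, tm]
  rw [h₁, h₁₀]
  decide

theorem isPSMorphism_markedBlock {K : ℕ} (hK : 10 ≤ K) : IsPSMorphism K markedBlock := by
  have h : IsPSMorphism 10 markedBlock := by
    unfold IsPSMorphism
    decide +kernel
  exact h.mono hK

theorem not_repeats_markedBlock_of_le_nine : ∀ x, ∀ p < 6, ∀ r < 10, 1 ≤ p → r + 2 * p ≤ 9 →
    ¬ Repeats (markedBlock x) r p p := by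
  decide +kernel

theorem isSquareFree_markedBlock (x : Fin 4) : IsSquareFree (markedBlock x) := by
  intro r p hp h
  rcases lt_or_ge 9 r with hr | hr
  · refine isOverlapFree_tm.isSquareFree_ternaryDiff (r - 10) p hp fun j hj => ?_
    have hj' := h j hj
    rw [show r + j = 10 + (r - 10 + j) by omega, add_assoc 10, markedBlock_ten_add,
      markedBlock_ten_add] at hj'
    exact Fin.castSucc_injective _ hj'
  rcases lt_or_ge 9 (r + 2 * p) with hp9 | hp9
  · rcases lt_or_ge 9 (r + p) with hfirst | hsecond
    · have h9 := h.eq_add (n := 9) (by omega) hfirst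
      rw [markedBlock_eq_three_iff.2 (.inr rfl), eq_comm, markedBlock_eq_three_iff] at h9
      omega
    · have h9 := h.eq_add (n := 9 - p) (by omega) (by omega)
      rw [Nat.sub_add_cancel (by omega), (markedBlock_eq_three_iff (r := 9)).2 (.inr rfl),
        markedBlock_eq_three_iff] at h9
      obtain ⟨rfl, rfl⟩ : r = 0 ∧ p = 9 := by omega
      exact markedBlock_one_ne_ten x (h 1 (by omega))
  · exact not_repeats_markedBlock_of_le_nine x p (by omega) r (by omega) hp hp9 h

variable {K : ℕ} {a : ℕ → Fin 4}

theorem markedImage_eq_three_iff {n : ℕ} :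
    uniformImage K markedBlock a n = 3 ↔ n % K = 0 ∨ n % K = 9 :=
  markedBlock_eq_three_iff

theorem mod_eq_of_markedImage_eq_three (hK : 0 < K) {n p : ℕ} (hp : ¬ K ∣ p)
    (hn : uniformImage K markedBlock a n = 3) (hnp : uniformImage K markedBlock a (n + p) = 3) :
    n % K = 0 ∧ p % K = 9 ∨ n % K = 9 ∧ p % K + 9 = K := by
  rw [markedImage_eq_three_iff] at hn hnp
  rw [Nat.add_mod_eq_ite] at hnp
  have hpK : p % K < K := p.mod_lt hK
  have hp0 : p % K ≠ 0 := mt Nat.dvd_of_mod_eq_zero hp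
  split_ifs at hnp <;> omega

theorem not_repeats_markedImage_of_within_block {q r p : ℕ} (hp : 1 ≤ p) (hr : r + 2 * p ≤ K) :
    ¬ Repeats (uniformImage K markedBlock a) (K * q + r) p p := by
  refine fun h => isSquareFree_markedBlock (a q) r p hp fun j hj => ?_
  rw [← uniformImage_mul_add markedBlock a q (by omega : r + j < K),
    ← uniformImage_mul_add markedBlock a q (by omega : r + j + p < K)]
  simpa only [add_assoc] using h j hj

theorem eq_nine_of_repeats_markedImage_of_boundary_left (hK : 27 ≤ K) {i p b : ℕ} (hp : ¬ K ∣ p)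
    (h : Repeats (uniformImage K markedBlock a) i p p) (hi : i ≤ K * b) (hb : K * b < i + p) :
    p = 9 := by
  have hshift (n : ℕ) (hin : i ≤ n) (hn : n < i + p) (hn3 : n % K = 0 ∨ n % K = 9) :
      n % K = 0 ∧ p % K = 9 ∨ n % K = 9 ∧ p % K + 9 = K := by
    have hmarker := (markedImage_eq_three_iff (a := a)).2 hn3
    exact mod_eq_of_markedImage_eq_three (by omega) hp hmarker (h.eq_add hin hn ▸ hmarker)
  have hpK : p % K = 9 := by
    have := hshift _ hi hb (.inl (K.mul_mod_right b))
    rw [Nat.mul_mod_right] at this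
    omega
  have hnine (n : ℕ) (hin : i ≤ n) (hn : n % K = 9) : i + p ≤ n := by
    by_contra! hlt
    have := hshift n hin hlt (.inr hn)
    omega
  have hright : i + p ≤ K * b + 9 :=
    hnine _ (by omega) (by rw [Nat.mul_add_mod, Nat.mod_eq_of_lt (by omega)])
  have hleft : K * b < i + (K - 9) := by
    by_contra! hle
    obtain ⟨c, rfl⟩ : ∃ c, b = c + 1 :=
      Nat.exists_eq_succ_of_ne_zero (by rintro rfl; omega)
    rw [mul_add_one] at hb hle
    have := hnine (K * c + 9) (by omega) (by rw [Nat.mul_add_mod, Nat.mod_eq_of_lt (by omega)])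
    omega
  rwa [Nat.mod_eq_of_lt (by omega)] at hpK

theorem not_repeats_nine_markedImage_of_boundary_left (hK : 27 ≤ K) {i b : ℕ} (hi : i ≤ K * b)
    (hb : K * b < i + 9) : ¬ Repeats (uniformImage K markedBlock a) i 9 9 := by
  intro h
  rcases Nat.lt_or_ge (K * b + 1) (i + 9) with hlt | hge
  · have heq := h.eq_add (by omega) hlt
    rw [add_assoc, uniformImage_mul_add _ _ _ (by omega),
      uniformImage_mul_add _ _ _ (by omega)] at heq
    exact markedBlock_one_ne_ten _ heq
  obtain ⟨c, rfl⟩ : ∃ c, b = c + 1 :=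
    Nat.exists_eq_succ_of_ne_zero (by rintro rfl; omega)
  rw [mul_add_one] at hi hb hge
  have hend (j : ℕ) (hj : j < 3) :
      (ternaryDiff tm (K - 18 + j)).castSucc = markedBlock (a (c + 1)) (1 + j) := by
    have hpos : K * c + (10 + (K - 18 + j)) = i + j := by omega
    have hpos' : i + j + 9 = K * (c + 1) + (1 + j) := by rw [mul_add_one]; omega
    rw [← markedBlock_ten_add (a c),
      ← uniformImage_mul_add markedBlock a c (by omega : 10 + (K - 18 + j) < K), hpos,
      h j (by omega), hpos', uniformImage_mul_add markedBlock a _ (by omega)]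
  have hhead : ∀ x, markedBlock x 1 = 0 ∧ markedBlock x 2 = 1 ∧ markedBlock x 3 = 0 := by decide
  obtain ⟨h₁, h₂, h₃⟩ := hhead (a (c + 1))
  exact ternaryDiff_ne_one_of_eq_zero
    (Fin.castSucc_injective _ ((hend 0 (by omega)).trans h₁))
    (Fin.castSucc_injective _ ((hend 2 (by omega)).trans h₃))
    (Fin.castSucc_injective _ ((hend 1 (by omega)).trans h₂))

theorem not_repeats_markedImage_of_boundary_right (hK : 27 ≤ K) {i p b : ℕ} (hp : ¬ K ∣ p)
    (hi : i + p ≤ K * b) (hb : K * b < i + 2 * p) :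
    ¬ Repeats (uniformImage K markedBlock a) i p p := by
  intro h
  obtain ⟨n, hn⟩ : ∃ n, K * b = n + p := Nat.exists_eq_add_of_le' (by omega)
  have hmarker : uniformImage K markedBlock a n = uniformImage K markedBlock a (K * b) := by
    rw [hn, h.eq_add (by omega) (by omega)]
  have hboundary : uniformImage K markedBlock a (K * b) = 3 :=
    markedImage_eq_three_iff.2 (.inl (K.mul_mod_right b))
  obtain ⟨hn0, -⟩ | ⟨hn9, hpK⟩ :=
    mod_eq_of_markedImage_eq_three (by omega) hp (hmarker.trans hboundary) (hn ▸ hboundary)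
  · exact hp ((Nat.dvd_add_right (Nat.dvd_of_mod_eq_zero hn0)).1 ⟨b, hn.symm⟩)
  have hsplit : n = K * (n / K) + 9 := by rw [← hn9, Nat.div_add_mod]
  rcases le_or_gt i (K * (n / K)) with hle | hgt
  · obtain rfl := eq_nine_of_repeats_markedImage_of_boundary_left hK hp h hle (by omega)
    rw [Nat.mod_eq_of_lt (by omega)] at hpK
    omega
  rcases lt_or_ge (n + 9) (i + p) with hlt | hge
  · have heq := h.eq_add (by omega) hlt
    rw [add_right_comm, ← hn, uniformImage_mul_add _ _ _ (by omega),
      markedBlock_eq_three_iff.2 (.inr rfl), markedImage_eq_three_iff, hsplit,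
      add_assoc, Nat.mul_add_mod, Nat.mod_eq_of_lt (by omega)] at heq
    omega
  · have := p.mod_le K
    omega

/- A period that is not a multiple of `K` can carry a marker only to the other marker of a block, so
it is `9` or `-9` modulo `K`. If it differs from `9`, the other marker of one of these blocks also
lies in the square and has no partner; if it is `9`, the letters next to the marker differ. -/
theorem dvd_of_repeats_markedImage (hK : 27 ≤ K) {i p : ℕ} (hp : 1 ≤ p)
    (h : Repeats (uniformImage K markedBlock a) i p p) : K ∣ p := by
  by_contra hdvd
  have hsplit : i = K * (i / K) + i % K := (Nat.div_add_mod i K).symm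
  have hmod : i % K < K := i.mod_lt (by omega)
  have hnext : K * (i / K + 1) = K * (i / K) + K := mul_add_one ..
  rcases le_or_gt (i % K + 2 * p) K with hwithin | hboundary
  · rw [hsplit] at h
    exact not_repeats_markedImage_of_within_block hp hwithin h
  rcases Nat.lt_or_ge (K * (i / K + 1)) (i + p) with hleft | hright
  · obtain rfl := eq_nine_of_repeats_markedImage_of_boundary_left hK hdvd h (by omega) hleft
    exact not_repeats_nine_markedImage_of_boundary_left hK (by omega) hleft h
  · exact not_repeats_markedImage_of_boundary_right hK hdvd hright (by omega) h

theorem isSquareFree_of_isFixedPt_markedBlock (hK : 27 ≤ K)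
    (ha : IsFixedPt (uniformImage K markedBlock) a) : IsSquareFree a := by
  intro i p hp h
  induction p using Nat.strong_induction_on generalizing i with
  | _ p ih =>
    rw [← ha] at h
    obtain ⟨m, rfl⟩ := dvd_of_repeats_markedImage hK hp h
    have hm : 0 < m := Nat.pos_of_mul_pos_left hp
    obtain ⟨q, hq⟩ := (isPSMorphism_markedBlock (by omega)).exists_square (by omega) hm h
    exact ih m (by nlinarith) q hm hq

end MarkedBlocks

section BinaryImage

/-- The blocks of a `21`-uniform ps-morphism from four letters to two. The letters at positions `9`
and `10` spell the argument in binary. -/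
def binaryBlock : Fin 4 → List (Fin 2) :=
  ![[0, 1, 1, 0, 1, 0, 0, 1, 1, 0, 0, 1, 0, 0, 1, 1, 0, 1, 0, 0, 1],
    [0, 1, 1, 0, 1, 0, 0, 1, 1, 0, 1, 1, 0, 0, 1, 1, 0, 1, 0, 0, 1],
    [1, 0, 0, 1, 0, 1, 1, 0, 0, 1, 0, 0, 1, 1, 0, 0, 1, 0, 1, 1, 0],
    [1, 0, 0, 1, 0, 1, 1, 0, 0, 1, 1, 0, 1, 1, 0, 0, 1, 0, 1, 1, 0]]

/-- The morphism with blocks `binaryBlock`, as a function of the letter and the position in the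
block. -/
def binaryMorphism (x : Fin 4) (r : ℕ) : Fin 2 :=
  (binaryBlock x).getD r 0

theorem map_range_binaryMorphism :
    ∀ x, (List.range 21).map (binaryMorphism x) = binaryBlock x := by
  decide

theorem isPSMorphism_binaryMorphism : IsPSMorphism 21 binaryMorphism := by
  unfold IsPSMorphism
  decide +kernel

/- A factor of length `n` and period `p` with `3 * n > 7 * p` repeats at least `4 * p / 3 + 1`
letters. For `14 ≤ p` this is at least `19`, the length from which a factor determines its position
modulo `21`. -/
theorem binaryBlock_factor_ne_of_short_period : ∀ x y z, x ≠ y → y ≠ z → ∀ p < 14, 1 ≤ p →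
    ∀ o < 21, ((binaryBlock x ++ binaryBlock y ++ binaryBlock z).drop o).take (4 * p / 3 + 1) ≠
      ((binaryBlock x ++ binaryBlock y ++ binaryBlock z).drop (o + p)).take (4 * p / 3 + 1) := by
  decide +kernel

theorem binaryBlock_factor_ne_of_lt : ∀ x y x' y', x ≠ y → x' ≠ y' → ∀ o < 21, ∀ o' < o,
    ((binaryBlock x ++ binaryBlock y).drop o).take 19 ≠
      ((binaryBlock x' ++ binaryBlock y').drop o').take 19 := by
  decide +kernel

variable {a : ℕ → Fin 4}

theorem factor_binaryImage (q m : ℕ) :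
    factor (uniformImage 21 binaryMorphism a) (21 * q) (21 * m) =
      (factor a q m).flatMap binaryBlock := by
  simp only [factor_uniformImage, map_range_binaryMorphism]

theorem factor_binaryImage_two (q : ℕ) {o l : ℕ} (h : o + l ≤ 42) :
    factor (uniformImage 21 binaryMorphism a) (21 * q + o) l =
      ((binaryBlock (a q) ++ binaryBlock (a (q + 1))).drop o).take l := by
  rw [factor_add_eq_take_drop _ h, factor_binaryImage q 2]
  simp [factor, List.range'_succ]

theorem factor_binaryImage_three (q : ℕ) {o l : ℕ} (h : o + l ≤ 63) :
    factor (uniformImage 21 binaryMorphism a) (21 * q + o) l =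
      ((binaryBlock (a q) ++ binaryBlock (a (q + 1)) ++
        binaryBlock (a (q + 2))).drop o).take l := by
  rw [factor_add_eq_take_drop _ h, factor_binaryImage q 3]
  simp [factor, List.range'_succ]

theorem not_repeats_binaryImage_of_short_period (ha : IsSquareFree a) (i : ℕ) {p : ℕ} (hp : 1 ≤ p)
    (hp14 : p < 14) : ¬ Repeats (uniformImage 21 binaryMorphism a) i p (4 * p / 3 + 1) := by
  intro h
  have hmod : i % 21 < 21 := i.mod_lt (by norm_num)
  have hfactor := h.factor_eq
  rw [← Nat.div_add_mod i 21, add_assoc, factor_binaryImage_three _ (by omega),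
    factor_binaryImage_three _ (by omega)] at hfactor
  exact binaryBlock_factor_ne_of_short_period _ _ _ (ha.ne_succ _) (ha.ne_succ _) p hp14 hp _ hmod
    hfactor

theorem mod_eq_of_factor_binaryImage_eq (ha : IsSquareFree a) {m n : ℕ}
    (h : factor (uniformImage 21 binaryMorphism a) m 19 =
      factor (uniformImage 21 binaryMorphism a) n 19) : m % 21 = n % 21 := by
  have hm : m % 21 < 21 := m.mod_lt (by norm_num)
  have hn : n % 21 < 21 := n.mod_lt (by norm_num)
  rw [← Nat.div_add_mod m 21, ← Nat.div_add_mod n 21,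
    factor_binaryImage_two _ (by omega),
    factor_binaryImage_two _ (by omega)] at h
  by_contra hne
  rcases Nat.lt_or_gt_of_ne hne with hlt | hgt
  · exact binaryBlock_factor_ne_of_lt _ _ _ _ (ha.ne_succ _) (ha.ne_succ _) _ hn _ hlt h.symm
  · exact binaryBlock_factor_ne_of_lt _ _ _ _ (ha.ne_succ _) (ha.ne_succ _) _ hm _ hgt h

theorem not_repeats_binaryImage (ha : IsSquareFree a) (i : ℕ) {p : ℕ} (hp : 1 ≤ p) :
    ¬ Repeats (uniformImage 21 binaryMorphism a) i p (4 * p / 3 + 1) := by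
  intro h
  rcases lt_or_ge p 14 with hp14 | hp14
  · exact not_repeats_binaryImage_of_short_period ha i hp hp14 h
  have hmod : i % 21 = (i + p) % 21 :=
    mod_eq_of_factor_binaryImage_eq ha (h.mono (by omega)).factor_eq
  obtain ⟨m, rfl⟩ : 21 ∣ p := by omega
  obtain ⟨q, hq⟩ := isPSMorphism_binaryMorphism.exists_square (by norm_num) (by omega)
    (h.mono (by omega : 21 * m ≤ _))
  exact ha q m (by omega) hq

theorem critExpLeSevenThirds_binaryImage (ha : IsSquareFree a) :
    CritExpLeSevenThirds (uniformImage 21 binaryMorphism a) := by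
  rintro ⟨i, n, p, hp, -, hlong, h⟩
  exact not_repeats_binaryImage ha i hp fun j hj => h j (by omega)

end BinaryImage

theorem exists_isAutomatic_critExpLeSevenThirds {k : ℕ} (hk : 2 ≤ k) :
    ∃ a : ℕ → Fin 2, IsAutomatic k a ∧ CritExpLeSevenThirds a := by
  have hK : 27 ≤ k ^ 5 := (by norm_num : 27 ≤ 2 ^ 5).trans (Nat.pow_le_pow_left hk 5)
  obtain ⟨s, hs⟩ := exists_isFixedPt_of_prolongable (by omega : 1 < k ^ 5)
    (markedBlock_eq_three_iff.2 (.inl rfl))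
  exact ⟨uniformImage 21 binaryMorphism s,
    isAutomatic_uniformImage hk (by norm_num) (by norm_num) hs binaryMorphism,
    critExpLeSevenThirds_binaryImage (isSquareFree_of_isFixedPt_markedBlock hK hs)⟩

theorem isAutomatic_two_pow_tm {i : ℕ} (hi : 1 < 2 ^ i) : IsAutomatic (2 ^ i) tm := by
  obtain ⟨τ, hτ⟩ := exists_isFixedPt_uniformImage_pow isFixedPt_tm i
  exact isAutomatic_comp_of_isFixedPt hi hτ id

theorem repeats_tm_one : Repeats tm 1 1 1 := by
  simp [Repeats, tm]

end RepetitionThreshold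

/-- For every k ≥ 2 there is a binary k-automatic sequence of critical exponent
at most 7/3; and if k is a power of 2, the Thue–Morse sequence works: it is
k-automatic and has critical exponent exactly 2 (it contains a square but no
factor of exponent greater than 2). -/
theorem repetition_threshold_automatic (k : ℕ) (hk : 2 ≤ k) :
    (∃ a : ℕ → Fin 2, IsAutomatic k a ∧ CritExpLeSevenThirds a) ∧
    ((∃ i : ℕ, k = 2 ^ i) →
      IsAutomatic k tm ∧
      (∃ i p : ℕ, 1 ≤ p ∧ ∀ j < p, tm (i + j) = tm (i + j + p)) ∧
      (¬ ∃ i p : ℕ, 1 ≤ p ∧ ∀ j ≤ p, tm (i + j) = tm (i + j + p))) := by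
  refine ⟨RepetitionThreshold.exists_isAutomatic_critExpLeSevenThirds hk, ?_⟩
  rintro ⟨i, rfl⟩
  have hautomatic : IsAutomatic (2 ^ i) tm := RepetitionThreshold.isAutomatic_two_pow_tm hk
  have hsquare : ∀ j < 1, tm (1 + j) = tm (1 + j + 1) := RepetitionThreshold.repeats_tm_one
  refine ⟨hautomatic, ⟨1, 1, le_rfl, hsquare⟩, ?_⟩
  rintro ⟨i, p, hp, hoverlap⟩
  exact RepetitionThreshold.isOverlapFree_tm i p hp fun j hj => hoverlap j (Nat.le_of_lt_succ hj)
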